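/- Let p be a prime, r ≥ 1, and let C be a free convolutional code of length n and rank k over ℤ/p^r, with G a Reduced Internal Degree Matrix encoder of C. Then C is non-catastrophic — i.e., C admits some full-row-rank polynomial generator matrix G' over (ℤ/p^r)[D] (with the same row span as G over the Laurent series ring) such that every Laurent series input u ∈ ((ℤ/p^r)((D)))^k for which u·G' has finite Hamming weight itself has finite Hamming weight — if and only if the monic greatest common divisor in 𝔽_p[D] of the k × k minors of the reduction of G modulo p is equal to D^s for some integer s ≥ 0. -/

import Mathlib

open Polynomial Matrix

/-- The natural ring homomorphism from polynomials over a commutative ring to Laurent series. -/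
noncomputable def polyToLS (R : Type*) [CommRing R] : Polynomial R →+* LaurentSeries R :=
  (HahnSeries.ofPowerSeries ℤ R).comp Polynomial.coeToPowerSeries.ringHom

/-- The `k × k` minor of a `k × n` matrix determined by a choice of columns. -/
noncomputable def minorOn {R : Type*} [CommRing R] {k n : ℕ}
    (G : Matrix (Fin k) (Fin n) R) (c : Fin k → Fin n) : R :=
  (G.submatrix id c).det

/-- A polynomial matrix has full row rank if some maximal minor is a non-zero-divisor. -/
def FullRowRank {R : Type*} [CommRing R] {k n : ℕ}
    (G : Matrix (Fin k) (Fin n) (Polynomial R)) : Prop :=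
  ∃ c : Fin k → Fin n, minorOn G c ∈ nonZeroDivisors (Polynomial R)

/-- The free convolutional code (row span over the Laurent series ring) generated by `G`. -/
noncomputable def code {R : Type*} [CommRing R] {k n : ℕ}
    (G : Matrix (Fin k) (Fin n) (Polynomial R)) : Set (Fin n → LaurentSeries R) :=
  {v | ∃ u : Fin k → LaurentSeries R, v = Matrix.vecMul u (G.map (polyToLS R))}

/-- The internal degree of a polynomial matrix: the maximal degree of its maximal minors. -/
noncomputable def intdeg {R : Type*} [CommRing R] {k n : ℕ}
    (G : Matrix (Fin k) (Fin n) (Polynomial R)) : WithBot ℕ :=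
  Finset.univ.sup fun c : Fin k → Fin n => (minorOn G c).degree

/-- Coefficientwise/entrywise reduction modulo `p` of a matrix over `(ℤ/p^r)[D]`. -/
noncomputable def reduceMod (p r : ℕ) (hr : r ≠ 0) {k n : ℕ}
    (G : Matrix (Fin k) (Fin n) (Polynomial (ZMod (p ^ r)))) :
    Matrix (Fin k) (Fin n) (Polynomial (ZMod p)) :=
  G.map (Polynomial.map (ZMod.castHom (dvd_pow_self p hr) (ZMod p)))

/-- The monic greatest common divisor in `𝔽_p[D]` of the maximal minors of a matrix. -/
noncomputable def gcdMinors {p : ℕ} [Fact p.Prime] {k n : ℕ}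
    (G : Matrix (Fin k) (Fin n) (Polynomial (ZMod p))) : Polynomial (ZMod p) :=
  Finset.univ.gcd fun c : Fin k → Fin n => minorOn G c

/-- A vector of Laurent series has finite Hamming weight iff each component has
finitely many nonzero coefficients. -/
def FiniteWeight {R : Type*} [CommRing R] {m : ℕ} (v : Fin m → LaurentSeries R) : Prop :=
  ∀ i, (v i).support.Finite

/-- A polynomial generator matrix is non-catastrophic if every input whose output has finite
Hamming weight itself has finite Hamming weight. -/
noncomputable def NonCatastrophic {R : Type*} [CommRing R] {k n : ℕ}
    (G : Matrix (Fin k) (Fin n) (Polynomial R)) : Prop :=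
  ∀ u : Fin k → LaurentSeries R,
    FiniteWeight (Matrix.vecMul u (G.map (polyToLS R))) → FiniteWeight u

/-- The dual of a set of words: all vectors orthogonal to every word. -/
def dualCode {R : Type*} [CommRing R] {n : ℕ}
    (C : Set (Fin n → LaurentSeries R)) : Set (Fin n → LaurentSeries R) :=
  {v | ∀ w ∈ C, ∑ i, v i * w i = 0}

/-!
Write `X` for `D`, and reduce along `R → K` with nilpotent kernel. Suppose an irreducible `f` not
dividing `X` divides every maximal minor of the reduction `Ḡ` of `G`. The rows of `Ḡ` are then
dependent modulo `f`, so `f • y = v ᵥ* Ḡ` with some `v i ≠ 0` of degree below `deg f`. If the code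
has a non-catastrophic encoder, the reduction of that encoder is non-catastrophic too, so some
`X ^ m • y` is a polynomial combination of its rows, and Bézout for `f` and `X ^ m` lifts `y` to a
polynomial codeword `x`. Replacing row `i` of `G` by `x` multiplies all minors by a single Laurent
series, which reduces to `v i / f`. By Weierstrass preparation a polynomial with nonzero reduction
is a unit times a monic polynomial of the reduced degree, so after scaling `x` by a unit the
internal degree drops, contradicting minimality.

Conversely, if the gcd of the reduced minors is `X ^ s`, nilpotency of the kernel puts a power of
`X` into the ideal of the minors of `G`, and Cramer's rule yields `H` with `G * H = X ^ m • 1`.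
-/

open scoped nonZeroDivisors

section Minors

variable {A B : Type*} [CommRing A] [CommRing B] {k n : ℕ}

lemma minorOn_map (f : A →+* B) (G : Matrix (Fin k) (Fin n) A) (c : Fin k → Fin n) :
    minorOn (G.map f) c = f (minorOn G c) := by
  rw [minorOn, minorOn, RingHom.map_det]
  rfl

lemma exists_mul_eq_smul_one_of_mem_span_minorOn (G : Matrix (Fin k) (Fin n) A) {d : A}
    (hd : d ∈ Ideal.span (Set.range (minorOn G))) :
    ∃ H : Matrix (Fin n) (Fin k) A, G * H = d • (1 : Matrix (Fin k) (Fin k) A) := by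
  obtain ⟨a, rfl⟩ := Ideal.mem_span_range_iff_exists_fun.1 hd
  refine ⟨∑ c, a c • ((1 : Matrix (Fin n) (Fin n) A).submatrix id c *
    (G.submatrix id c).adjugate), ?_⟩
  rw [Matrix.mul_sum, Finset.sum_smul]
  refine Finset.sum_congr rfl fun c _ => ?_
  have hselect : G * (1 : Matrix (Fin n) (Fin n) A).submatrix id c = G.submatrix id c := by
    simpa using G.mul_submatrix_one (Equiv.refl (Fin n)) c
  rw [Matrix.mul_smul, ← Matrix.mul_assoc, hselect, Matrix.mul_adjugate, smul_smul]
  rfl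

lemma span_minorOn_map (f : A →+* B) (G : Matrix (Fin k) (Fin n) A) :
    Ideal.span (Set.range (minorOn (G.map f))) = (Ideal.span (Set.range (minorOn G))).map f := by
  rw [Ideal.map_span, ← Set.range_comp]
  exact congrArg (Ideal.span <| Set.range ·) (funext (minorOn_map f G))

lemma submatrix_id_updateRow {l m m' M : Type*} [DecidableEq l] (G : Matrix l m M) (i : l)
    (y : m → M) (c : m' → m) :
    (G.updateRow i y).submatrix id c = (G.submatrix id c).updateRow i (y ∘ c) := by
  ext i' j
  by_cases hi : i' = i <;> simp [hi, Matrix.updateRow_apply]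

lemma minorOn_updateRow_smul (G : Matrix (Fin k) (Fin n) A) (i : Fin k) (a : A) (y : Fin n → A)
    (c : Fin k → Fin n) :
    minorOn (G.updateRow i (a • y)) c = a * minorOn (G.updateRow i y) c := by
  rw [minorOn, minorOn, submatrix_id_updateRow, submatrix_id_updateRow, ← det_updateRow_smul]
  rfl

lemma mul_minorOn_updateRow {G : Matrix (Fin k) (Fin n) A} {a : A} {y : Fin n → A}
    {v : Fin k → A} (h : a • y = v ᵥ* G) (i : Fin k) (c : Fin k → Fin n) :
    a * minorOn (G.updateRow i y) c = v i * minorOn G c := by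
  have hrow : a • (y ∘ c) = ∑ l, v l • (G.submatrix id c) l := by
    rw [← Matrix.vecMul_eq_sum]
    exact congrArg (· ∘ c) h
  rw [minorOn, submatrix_id_updateRow, ← det_updateRow_smul, hrow, det_updateRow_sum, smul_eq_mul]
  rfl

lemma exists_minorOn_ne_zero {K : Type*} [Field K] {G : Matrix (Fin k) (Fin n) K}
    (hG : LinearIndependent K G.row) : ∃ c, minorOn G c ≠ 0 := by
  have hrank : Module.finrank K (Submodule.span K (Set.range G.col)) = k := by
    rw [← rank_eq_finrank_span_cols, hG.rank_matrix, Fintype.card_fin]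
  obtain ⟨b, hbmem, -, hb⟩ := Submodule.exists_fun_fin_finrank_span_eq K (Set.range G.col)
  choose c hc using hbmem
  have hcols : LinearIndependent K (G.submatrix id (c ∘ Fin.cast hrank.symm)).col := by
    obtain rfl : (fun i => G.col (c i)) = b := funext hc
    exact hb.comp _ (Fin.cast_injective hrank.symm)
  exact ⟨_, ((isUnit_iff_isUnit_det _).1 (linearIndependent_cols_iff_isUnit.1 hcols)).ne_zero⟩

lemma exists_smul_eq_vecMul_of_irreducible {K : Type*} [Field K] {G : Matrix (Fin k) (Fin n) K[X]}
    {f : K[X]} (hf : Irreducible f) (hdvd : ∀ c, f ∣ minorOn G c) :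
    ∃ (i : Fin k) (v : Fin k → K[X]) (y : Fin n → K[X]),
      v i ≠ 0 ∧ (v i).degree < f.degree ∧ f • y = v ᵥ* G := by
  have := Fact.mk hf
  have hdep : ¬LinearIndependent (AdjoinRoot f) (G.map (AdjoinRoot.mk f)).row := fun hind => by
    obtain ⟨c, hc⟩ := exists_minorOn_ne_zero hind
    exact hc (by rw [minorOn_map, AdjoinRoot.mk_eq_zero.2 (hdvd c)])
  obtain ⟨g, hg, i, hi⟩ := Fintype.not_linearIndependent_iff.1 hdep
  choose v hv using fun l => AdjoinRoot.mk_surjective (g l)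
  have hmod : AdjoinRoot.mk f ∘ (fun l => v l % f) = g := funext fun l => by
    rw [Function.comp_apply, ← hv l, AdjoinRoot.mk_eq_mk, EuclideanDomain.mod_eq_sub_mul_div]
    exact ⟨-(v l / f), by ring⟩
  have hfdvd : ∀ j, f ∣ ((fun l => v l % f) ᵥ* G) j := fun j => by
    rw [← AdjoinRoot.mk_eq_zero, RingHom.map_vecMul, hmod, Matrix.vecMul_eq_sum]
    exact congrFun hg j
  choose y hy using hfdvd
  refine ⟨i, fun l => v l % f, y, ?_, degree_mod_lt _ hf.ne_zero, ?_⟩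
  · exact fun h0 => hi ((congrFun hmod i).symm.trans ((congrArg _ h0).trans (map_zero _)))
  · exact funext fun j => (hy j).symm

end Minors

section NilpotentKernel

variable {A B : Type*} [CommRing A] [CommRing B] {φ : A →+* B}

lemma isNilpotent_of_map_eq_zero (hker : IsNilpotent (RingHom.ker φ)) {a : A} (ha : φ a = 0) :
    IsNilpotent a := by
  obtain ⟨m, hm⟩ := hker
  have hmem : a ^ m ∈ RingHom.ker φ ^ m := Ideal.pow_mem_pow (RingHom.mem_ker.2 ha) m
  exact ⟨m, by rwa [hm] at hmem⟩

lemma mem_radical_of_map_mem (hφ : Function.Surjective φ) (hker : IsNilpotent (RingHom.ker φ))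
    {I : Ideal A} {a : A} (ha : φ a ∈ I.map φ) : a ∈ I.radical := by
  have hle : I ⊔ RingHom.ker φ ≤ I.radical := sup_le Ideal.le_radical fun x hx => by
    obtain ⟨m, hm⟩ := isNilpotent_of_map_eq_zero hker hx
    exact ⟨m, hm ▸ I.zero_mem⟩
  rw [← Ideal.mem_comap, Ideal.comap_map_of_surjective' φ hφ] at ha
  exact hle ha

lemma isUnit_of_isUnit_map (hφ : Function.Surjective φ) (hker : IsNilpotent (RingHom.ker φ))
    {a : A} (ha : IsUnit (φ a)) : IsUnit a := by
  have hmap : (Ideal.span {a}).map φ = ⊤ := by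
    rw [Ideal.map_span, Set.image_singleton, Ideal.span_singleton_eq_top.2 ha]
  have hone : (1 : A) ∈ (Ideal.span {a}).radical :=
    mem_radical_of_map_mem hφ hker (hmap ▸ Submodule.mem_top)
  rwa [← Ideal.eq_top_iff_one, Ideal.radical_eq_top, Ideal.span_singleton_eq_top] at hone

lemma isNilpotent_ker_mapRingHom (hker : IsNilpotent (RingHom.ker φ)) :
    IsNilpotent (RingHom.ker (mapRingHom φ)) := by
  obtain ⟨m, hm⟩ := hker
  exact ⟨m, by rw [ker_mapRingHom, ← Ideal.map_pow, hm, Ideal.zero_eq_bot, Ideal.map_bot,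
    Ideal.zero_eq_bot]⟩

end NilpotentKernel

section Weierstrass

variable {R K : Type*} [CommRing R] [Field K] {ψ : R →+* K}

lemma divByMonic_mem_map_C {I : Ideal R} {f g : R[X]} (hg : g.Monic) (hf : f ∈ I.map C) :
    f /ₘ g ∈ I.map C := by
  rw [← Ideal.mk_ker (I := I), ← ker_mapRingHom, RingHom.mem_ker, coe_mapRingHom] at hf ⊢
  rw [map_divByMonic _ hg, hf, zero_divByMonic]

lemma exists_unit_mul_sub_mem_ker_pow (hψ : Function.Surjective ψ)
    (hker : IsNilpotent (RingHom.ker ψ)) {f : R[X]} (hf : f.map ψ ≠ 0) (m : ℕ) :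
    ∃ (u : R[X]ˣ) (w : R[X]), w.Monic ∧ u * f - w ∈ RingHom.ker (mapRingHom ψ) ^ (m + 1) := by
  induction m with
  | zero =>
    obtain ⟨c, hc⟩ := hψ (f.map ψ).leadingCoeff⁻¹
    have hlead : (f.map ψ).leadingCoeff ≠ 0 := leadingCoeff_ne_zero.2 hf
    have hcunit : IsUnit (C c) :=
      (isUnit_of_isUnit_map hψ hker (hc ▸ (inv_ne_zero hlead).isUnit)).map C
    have hmonic : ((C c * f).map ψ).Monic := by
      rw [Polynomial.map_mul, map_C, hc, mul_comm]
      exact monic_mul_leadingCoeff_inv hf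
    obtain ⟨w, hw, -, hwmonic⟩ := lifts_and_natDegree_eq_and_monic
      ((mem_lifts _).2 ⟨C c * f, rfl⟩) hmonic
    refine ⟨hcunit.unit, w, hwmonic, ?_⟩
    rw [zero_add, pow_one, RingHom.mem_ker, map_sub, coe_mapRingHom, hw, IsUnit.unit_spec, sub_self]
  | succ m ih =>
    obtain ⟨u, w, hw, he⟩ := ih
    set e := u * f - w with he_def
    have hy : e /ₘ w ∈ RingHom.ker (mapRingHom ψ) ^ (m + 1) := by
      rw [ker_mapRingHom, ← Ideal.map_pow] at he ⊢
      exact divByMonic_mem_map_C hw he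
    have := ψ.domain_nontrivial
    have hunit : IsUnit (1 - e /ₘ w) := IsNilpotent.isUnit_one_sub <|
      isNilpotent_of_map_eq_zero (isNilpotent_ker_mapRingHom hker)
        (Ideal.pow_le_self m.succ_ne_zero hy)
    refine ⟨hunit.unit * u, w + e %ₘ w, hw.add_of_left (degree_modByMonic_lt e hw), ?_⟩
    -- Multiplying by `1 - e / w` replaces the error `e` by `-(e / w) * e`, once `e % w` is absorbed
    -- into `w`; this gains a power of the kernel.
    have herror : ↑(hunit.unit * u) * f - (w + e %ₘ w) = -(e /ₘ w * e) := by
      rw [Units.val_mul, IsUnit.unit_spec]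
      linear_combination (1 - e /ₘ w) * he_def.symm - modByMonic_add_div e w
    rw [herror]
    refine neg_mem (Ideal.pow_le_pow_right (show m + 1 + 1 ≤ m + 1 + (m + 1) by lia) ?_)
    rw [pow_add _ (m + 1) (m + 1)]
    exact Ideal.mul_mem_mul hy he

lemma exists_unit_mul_monic (hψ : Function.Surjective ψ) (hker : IsNilpotent (RingHom.ker ψ))
    {f : R[X]} (hf : f.map ψ ≠ 0) :
    ∃ u : R[X]ˣ, (u * f).Monic ∧ (u * f).degree = (f.map ψ).degree := by
  obtain ⟨m, hm⟩ := isNilpotent_ker_mapRingHom hker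
  obtain ⟨u, w, hw, hmem⟩ := exists_unit_mul_sub_mem_ker_pow hψ hker hf m
  rw [pow_succ, hm, zero_mul, Ideal.zero_eq_bot, Ideal.mem_bot, sub_eq_zero] at hmem
  have hmonic : (u * f).Monic := hmem ▸ hw
  refine ⟨u, hmonic, ?_⟩
  have hunit : IsUnit ((u : R[X]).map ψ) := u.isUnit.map (mapRingHom ψ)
  rw [← hmonic.degree_map ψ, Polynomial.map_mul, degree_mul, degree_eq_zero_of_isUnit hunit,
    zero_add]

lemma exists_unit_forall_degree_mul_lt (hψ : Function.Surjective ψ)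
    (hker : IsNilpotent (RingHom.ker ψ)) {ι : Type*} {a b : ι → R[X]}
    (hab : ∀ i j, a i * b j = a j * b i) {i : ι} (hb : (b i).map ψ ≠ 0)
    (hlt : ((b i).map ψ).degree < ((a i).map ψ).degree) :
    ∃ u : R[X]ˣ, ∀ j, b j ≠ 0 → (u * b j).degree < (a j).degree := by
  obtain ⟨s, hα, hαdeg⟩ := exists_unit_mul_monic hψ hker (ne_zero_of_degree_gt hlt)
  obtain ⟨t, hβ, hβdeg⟩ := exists_unit_mul_monic hψ hker hb
  refine ⟨t * s⁻¹, fun j hj => ?_⟩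
  have hne : (↑(t * s⁻¹) * b j).degree ≠ ⊥ := by
    rwa [Ne, degree_eq_bot, Units.mul_right_eq_zero]
  have hcross : ↑(t * s⁻¹) * b j * (s * a i) = a j * (t * b i) := by
    rw [Units.val_mul]
    linear_combination (↑t : R[X]) * b j * a i * s.inv_mul + (↑t : R[X]) * hab i j
  refine lt_of_add_lt_add_right (a := (t * b i).degree) ?_
  calc (↑(t * s⁻¹) * b j).degree + (t * b i).degree
      < (↑(t * s⁻¹) * b j).degree + (s * a i).degree :=
        WithBot.add_lt_add_left hne (by rwa [hαdeg, hβdeg])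
    _ = (a j).degree + (t * b i).degree := by rw [← hα.degree_mul, hcross, hβ.degree_mul]

end Weierstrass

section Laurent

variable {R S : Type*} [CommRing R] [CommRing S] {k n : ℕ}

lemma polyToLS_injective : Function.Injective (polyToLS R) :=
  HahnSeries.ofPowerSeries_injective.comp (Polynomial.coe_injective R)

lemma polyToLS_monomial (m : ℕ) (a : R) :
    polyToLS R (monomial m a) = HahnSeries.single (m : ℤ) a := by
  rw [polyToLS, RingHom.comp_apply, coeToPowerSeries.ringHom_apply, ← C_mul_X_pow_eq_monomial,
    Polynomial.coe_mul, Polynomial.coe_pow, coe_C, coe_X, map_mul, HahnSeries.ofPowerSeries_C,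
    HahnSeries.ofPowerSeries_X_pow, HahnSeries.C_apply, HahnSeries.single_mul_single, zero_add,
    mul_one]

lemma polyToLS_X_pow (m : ℕ) : polyToLS R (X ^ m) = HahnSeries.single (m : ℤ) 1 := by
  rw [← monomial_one_right_eq_X_pow, polyToLS_monomial]

lemma polyToLS_comp_vecMul (w : Fin k → R[X]) (G : Matrix (Fin k) (Fin n) R[X]) :
    polyToLS R ∘ (w ᵥ* G) = (polyToLS R ∘ w) ᵥ* G.map (polyToLS R) :=
  funext (RingHom.map_vecMul (polyToLS R) G w)

lemma finite_support_polyToLS (f : R[X]) : (polyToLS R f).support.Finite := by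
  refine (f.support.finite_toSet.image Nat.cast).subset
    (HahnSeries.support_embDomain_subset.trans (Set.image_mono fun i hi => mem_support_iff.2 ?_))
  rwa [← coeff_coe]

lemma finite_support_iff_exists_polyToLS {x : LaurentSeries R} :
    x.support.Finite ↔ ∃ (m : ℕ) (f : R[X]), polyToLS R (X ^ m) * x = polyToLS R f := by
  have hcoeff (m : ℕ) (j : ℤ) : (polyToLS R (X ^ m) * x).coeff j = x.coeff (j - m) := by
    rw [polyToLS_X_pow, HahnSeries.coeff_single_mul, one_mul]
  constructor
  · intro hx
    obtain ⟨b, hb⟩ := hx.bddBelow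
    refine ⟨b.natAbs, ∑ j ∈ hx.toFinset, monomial (j + b.natAbs).toNat (x.coeff j), ?_⟩
    ext j
    classical
    rw [hcoeff, map_sum, HahnSeries.coeff_sum]
    have hterm : ∀ l ∈ hx.toFinset, (polyToLS R (monomial (l + b.natAbs).toNat (x.coeff l))).coeff j
        = if j - b.natAbs = l then x.coeff l else 0 := fun l hl => by
      have hle : b ≤ l := hb (hx.mem_toFinset.1 hl)
      rw [polyToLS_monomial, HahnSeries.coeff_single]
      split_ifs <;> first | rfl | lia
    rw [Finset.sum_congr rfl hterm, Finset.sum_ite_eq]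
    split_ifs with hj
    · rfl
    · exact not_not.1 fun h => hj (hx.mem_toFinset.2 h)
  · rintro ⟨m, f, hf⟩
    refine ((finite_support_polyToLS f).preimage (add_left_injective (m : ℤ)).injOn).subset ?_
    intro j hj
    rwa [Set.mem_preimage, HahnSeries.mem_support, ← hf, hcoeff, add_sub_cancel_right]

lemma finiteWeight_iff_exists_polyToLS {v : Fin n → LaurentSeries R} :
    FiniteWeight v ↔
      ∃ (m : ℕ) (w : Fin n → R[X]), polyToLS R (X ^ m) • v = polyToLS R ∘ w := by
  constructor
  · intro hv
    choose m w hw using fun i => finite_support_iff_exists_polyToLS.1 (hv i)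
    refine ⟨∑ i, m i, fun i => X ^ (∑ l, m l - m i) * w i, funext fun i => ?_⟩
    have hle : m i ≤ ∑ l, m l := Finset.single_le_sum_of_canonicallyOrdered (Finset.mem_univ i)
    rw [Pi.smul_apply, Function.comp_apply, map_mul, ← hw i, smul_eq_mul, ← mul_assoc, ← map_mul,
      ← pow_add, Nat.sub_add_cancel hle]
  · rintro ⟨m, w, hw⟩ i
    exact finite_support_iff_exists_polyToLS.2 ⟨m, w i, congrFun hw i⟩

lemma nonCatastrophic_of_X_pow_mem_span {G : Matrix (Fin k) (Fin n) R[X]} {m : ℕ}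
    (h : X ^ m ∈ Ideal.span (Set.range (minorOn G))) : NonCatastrophic G := by
  obtain ⟨H, hH⟩ := exists_mul_eq_smul_one_of_mem_span_minorOn G h
  have hGH : G.map (polyToLS R) * H.map (polyToLS R) = polyToLS R (X ^ m) • 1 := by
    rw [← Matrix.map_mul, hH, Matrix.map_smul' _ _ _ (map_mul _),
      Matrix.map_one _ (map_zero _) (map_one _)]
  intro u hu
  obtain ⟨N, w, hw⟩ := finiteWeight_iff_exists_polyToLS.1 hu
  refine finiteWeight_iff_exists_polyToLS.2 ⟨N + m, w ᵥ* H, ?_⟩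
  rw [polyToLS_comp_vecMul, ← hw, Matrix.smul_vecMul, Matrix.vecMul_vecMul, hGH,
    Matrix.vecMul_smul, Matrix.vecMul_one, smul_smul, ← map_mul, ← pow_add]

/-- The ring homomorphism of Laurent series applying `f` to every coefficient. It reduces codes
over `R` to codes over the residue field. -/
noncomputable def laurentMap (f : R →+* S) : LaurentSeries R →+* LaurentSeries S where
  toFun x := x.map f
  map_zero' := HahnSeries.ext (funext fun _ => map_zero f)
  map_one' := HahnSeries.map_one f.toMonoidWithZeroHom
  map_add' _ _ := HahnSeries.map_add f.toAddMonoidHom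
  map_mul' _ _ := HahnSeries.map_mul f.toNonUnitalRingHom

lemma laurentMap_polyToLS (f : R →+* S) (g : R[X]) :
    laurentMap f (polyToLS R g) = polyToLS S (g.map f) := by
  induction g using Polynomial.induction_on' with
  | add g h hg hh => simp only [map_add, Polynomial.map_add, hg, hh]
  | monomial m a =>
    rw [map_monomial, polyToLS_monomial, polyToLS_monomial]
    exact HahnSeries.map_single (f : R →+ S).toZeroHom

lemma laurentMap_comp_vecMul (f : R →+* S) (u : Fin k → LaurentSeries R)
    (G : Matrix (Fin k) (Fin n) R[X]) :
    laurentMap f ∘ (u ᵥ* G.map (polyToLS R)) =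
      (laurentMap f ∘ u) ᵥ* (G.map (mapRingHom f)).map (polyToLS S) := by
  have hmap : (G.map (polyToLS R)).map (laurentMap f) =
      (G.map (mapRingHom f)).map (polyToLS S) :=
    Matrix.ext fun i j => laurentMap_polyToLS f (G i j)
  exact hmap ▸ funext (RingHom.map_vecMul (laurentMap f) _ u)

lemma laurentMap_surjective {f : R →+* S} (hf : Function.Surjective f) :
    Function.Surjective (laurentMap f) := fun x => by
  let g : ZeroHom S R := ⟨fun a => Function.surjInv hf a - Function.surjInv hf 0, sub_self _⟩
  refine ⟨x.map g, HahnSeries.ext (funext fun j => ?_)⟩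
  change f (Function.surjInv hf (x.coeff j) - Function.surjInv hf 0) = x.coeff j
  rw [map_sub, Function.surjInv_eq hf, Function.surjInv_eq hf, sub_zero]

lemma isNilpotent_ker_laurentMap {f : R →+* S} (hker : IsNilpotent (RingHom.ker f)) :
    IsNilpotent (RingHom.ker (laurentMap f)) := by
  have hcoeff (m : ℕ) (x : LaurentSeries R) (hx : x ∈ RingHom.ker (laurentMap f) ^ m) (j : ℤ) :
      x.coeff j ∈ RingHom.ker f ^ m := by
    induction m generalizing x j with
    | zero => rw [pow_zero, Ideal.one_eq_top]; exact Submodule.mem_top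
    | succ m ih =>
      rw [pow_succ] at hx ⊢
      induction hx using Submodule.mul_induction_on' with
      | mem_mul_mem y hy z hz =>
        rw [HahnSeries.coeff_mul]
        refine sum_mem fun ij _ => Ideal.mul_mem_mul (ih y hy ij.1) ?_
        exact congrArg (fun t : LaurentSeries S => t.coeff ij.2) (RingHom.mem_ker.1 hz)
      | add y _ z _ hy hz => exact add_mem hy hz
  obtain ⟨m, hm⟩ := hker
  refine ⟨m, (Submodule.eq_bot_iff _).2 fun x hx => HahnSeries.ext (funext fun j => ?_)⟩
  have hmem := hcoeff m x hx j
  rwa [hm] at hmem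

end Laurent

section Code

variable {R : Type*} [CommRing R] {k n : ℕ} {G : Matrix (Fin k) (Fin n) R[X]} {i : Fin k}
  {x : Fin n → R[X]} {w : Fin k → LaurentSeries R}

lemma polyToLS_minorOn_updateRow (hx : polyToLS R ∘ x = w ᵥ* G.map (polyToLS R))
    (c : Fin k → Fin n) :
    polyToLS R (minorOn (G.updateRow i x) c) = w i * polyToLS R (minorOn G c) := by
  rw [← minorOn_map, ← minorOn_map, map_updateRow,
    ← mul_minorOn_updateRow ((one_smul _ _).trans hx), one_mul]

lemma code_updateRow (hx : polyToLS R ∘ x = w ᵥ* G.map (polyToLS R)) (hw : IsUnit (w i)) :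
    code (G.updateRow i x) = code G := by
  set P := (1 : Matrix (Fin k) (Fin k) (LaurentSeries R)).updateRow i w
  have hP : IsUnit P.det := by
    have hsum : w = ∑ l, w l • (1 : Matrix (Fin k) (Fin k) (LaurentSeries R)) l := by
      rw [← Matrix.vecMul_eq_sum, Matrix.vecMul_one]
    have hdet : P.det = w i := by
      rw [show P = updateRow 1 i (∑ l, w l • (1 : Matrix _ _ _) l) from hsum ▸ rfl,
        det_updateRow_sum, det_one, smul_eq_mul, mul_one]
    rwa [hdet]
  have hmul : (G.updateRow i x).map (polyToLS R) = P * G.map (polyToLS R) := by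
    rw [map_updateRow, hx, updateRow_mul, Matrix.one_mul]
  refine Set.ext fun v => ⟨?_, ?_⟩
  · rintro ⟨u, rfl⟩
    exact ⟨u ᵥ* P, by rw [hmul, Matrix.vecMul_vecMul]⟩
  · rintro ⟨u, rfl⟩
    exact ⟨u ᵥ* P⁻¹, by
      rw [hmul, Matrix.vecMul_vecMul, ← Matrix.mul_assoc, nonsing_inv_mul P hP, Matrix.one_mul]⟩

end Code

lemma NonCatastrophic.exists_X_pow_smul_eq {K : Type*} [Field K] {k n : ℕ}
    {G : Matrix (Fin k) (Fin n) K[X]} (hG : NonCatastrophic G) {f : K[X]} (hf : f ≠ 0)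
    {y : Fin n → K[X]} {u : Fin k → LaurentSeries K}
    (h : polyToLS K ∘ (f • y) = u ᵥ* G.map (polyToLS K)) :
    ∃ (m : ℕ) (w : Fin k → K[X]), (X ^ m : K[X]) • y = w ᵥ* G := by
  have hf' : polyToLS K f ≠ 0 := (map_ne_zero_iff _ polyToLS_injective).2 hf
  have hdiv : ((polyToLS K f)⁻¹ • u) ᵥ* G.map (polyToLS K) = polyToLS K ∘ y := by
    rw [Matrix.smul_vecMul, ← h]
    refine funext fun j => ?_
    rw [Pi.smul_apply, Function.comp_apply, Pi.smul_apply, smul_eq_mul, smul_eq_mul, map_mul,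
      inv_mul_cancel_left₀ hf', Function.comp_apply]
  have hfin : FiniteWeight (polyToLS K ∘ y) := finiteWeight_iff_exists_polyToLS.2
    ⟨0, y, by rw [pow_zero, map_one, one_smul]⟩
  obtain ⟨m, w, hw⟩ := finiteWeight_iff_exists_polyToLS.1 (hG _ (hdiv ▸ hfin))
  refine ⟨m, w, polyToLS_injective.comp_left (show polyToLS K ∘ _ = polyToLS K ∘ _ from ?_)⟩
  rw [polyToLS_comp_vecMul, ← hw, Matrix.smul_vecMul, hdiv]
  exact funext fun j => map_mul _ _ _

section Reduction

variable {R K : Type*} [CommRing R] [Field K] {ψ : R →+* K} {k n : ℕ}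

lemma isUnit_polyToLS (hψ : Function.Surjective ψ) (hker : IsNilpotent (RingHom.ker ψ)) {f : R[X]}
    (hf : f.map ψ ≠ 0) : IsUnit (polyToLS R f) := by
  refine isUnit_of_isUnit_map (laurentMap_surjective hψ) (isNilpotent_ker_laurentMap hker) ?_
  rw [laurentMap_polyToLS]
  exact ((map_ne_zero_iff _ polyToLS_injective).2 hf).isUnit

lemma mem_nonZeroDivisors_iff_map_ne_zero (hψ : Function.Surjective ψ)
    (hker : IsNilpotent (RingHom.ker ψ)) {f : R[X]} : f ∈ R[X]⁰ ↔ f.map ψ ≠ 0 := by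
  have := ψ.domain_nontrivial
  refine ⟨fun hf hzero => ?_, fun hf => mem_nonZeroDivisors_of_injective polyToLS_injective
    (isUnit_polyToLS hψ hker hf).mem_nonZeroDivisors⟩
  obtain ⟨m, hm⟩ := isNilpotent_of_map_eq_zero (isNilpotent_ker_mapRingHom hker) hzero
  exact zero_notMem_nonZeroDivisors (hm ▸ pow_mem hf m)

lemma exists_mul_eq_zero_iff_map_eq_zero (hψ : Function.Surjective ψ)
    (hker : IsNilpotent (RingHom.ker ψ)) : ∃ a : R, ∀ x, a * x = 0 ↔ ψ x = 0 := by
  have := ψ.domain_nontrivial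
  obtain ⟨m, hm, hmin⟩ : ∃ m, RingHom.ker ψ ^ (m + 1) = 0 ∧ RingHom.ker ψ ^ m ≠ 0 := by
    refine ⟨nilpotencyClass (RingHom.ker ψ) - 1, ?_, pow_pred_nilpotencyClass hker⟩
    rw [Nat.sub_add_cancel (pos_nilpotencyClass_iff.2 hker), pow_nilpotencyClass hker]
  obtain ⟨a, ha, hne⟩ := Submodule.exists_mem_ne_zero_of_ne_bot hmin
  refine ⟨a, fun x => ⟨fun hax => ?_, fun hx => ?_⟩⟩
  · by_contra hx
    exact hne ((isUnit_of_isUnit_map hψ hker (Ne.isUnit hx)).mul_left_eq_zero.1 hax)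
  · have hmem : a * x ∈ RingHom.ker ψ ^ (m + 1) := pow_succ (RingHom.ker ψ) m ▸
      Ideal.mul_mem_mul ha hx
    rwa [hm] at hmem

lemma NonCatastrophic.map (hψ : Function.Surjective ψ) (hker : IsNilpotent (RingHom.ker ψ))
    {G : Matrix (Fin k) (Fin n) R[X]} (hG : NonCatastrophic G) :
    NonCatastrophic (G.map (mapRingHom ψ)) := by
  intro u hu
  obtain ⟨a, ha⟩ := exists_mul_eq_zero_iff_map_eq_zero hψ hker
  have hsupport (z : LaurentSeries R) :
      (HahnSeries.C a * z).support = (laurentMap ψ z).support := by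
    rw [HahnSeries.C_mul_eq_smul]
    exact Set.ext fun j => (ha (z.coeff j)).not
  obtain ⟨v, rfl⟩ := (laurentMap_surjective hψ).comp_left u
  have hav : FiniteWeight ((HahnSeries.C a : LaurentSeries R) • v) := hG _ fun j => by
    rw [Matrix.smul_vecMul, Pi.smul_apply, smul_eq_mul, hsupport,
      ← Function.comp_apply (f := laurentMap ψ), laurentMap_comp_vecMul]
    exact hu j
  exact fun i => hsupport (v i) ▸ hav i

lemma NonCatastrophic.exists_mem_code_of_smul_eq_vecMul (hψ : Function.Surjective ψ)
    (hker : IsNilpotent (RingHom.ker ψ)) {G G' : Matrix (Fin k) (Fin n) R[X]}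
    (hG' : NonCatastrophic G') (hcode : code G' = code G) {f : K[X]} (hf : Irreducible f)
    (hfX : ¬f ∣ X) {v : Fin k → K[X]} {y : Fin n → K[X]}
    (h : f • y = v ᵥ* G.map (mapRingHom ψ)) :
    ∃ x : Fin n → R[X], polyToLS R ∘ x ∈ code G ∧ mapRingHom ψ ∘ x = y := by
  have hsurj : Function.Surjective (mapRingHom ψ) := map_surjective ψ hψ
  obtain ⟨v, rfl⟩ := hsurj.comp_left v
  obtain ⟨u, hu⟩ : (polyToLS R ∘ v) ᵥ* G.map (polyToLS R) ∈ code G' := hcode ▸ ⟨_, rfl⟩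
  have hfy : polyToLS K ∘ (f • y) =
      (laurentMap ψ ∘ u) ᵥ* (G'.map (mapRingHom ψ)).map (polyToLS K) := by
    rw [← laurentMap_comp_vecMul, ← hu, laurentMap_comp_vecMul, h, polyToLS_comp_vecMul]
    congr 1
    exact funext fun l => (laurentMap_polyToLS ψ (v l)).symm
  obtain ⟨m, w, hw⟩ := (hG'.map hψ hker).exists_X_pow_smul_eq hf.ne_zero hfy
  obtain ⟨w, rfl⟩ := hsurj.comp_left w
  obtain ⟨u', hu'⟩ : (polyToLS R ∘ w) ᵥ* G'.map (polyToLS R) ∈ code G := hcode ▸ ⟨_, rfl⟩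
  obtain ⟨a, b, hbezout⟩ : IsCoprime f (X ^ m) := (hf.coprime_iff_not_dvd.2 hfX).pow_right
  obtain ⟨a, rfl⟩ := hsurj a
  obtain ⟨b, rfl⟩ := hsurj b
  refine ⟨a • (v ᵥ* G) + b • (w ᵥ* G'), ⟨polyToLS R a • polyToLS R ∘ v + polyToLS R b • u', ?_⟩, ?_⟩
  · rw [Matrix.add_vecMul, Matrix.smul_vecMul, Matrix.smul_vecMul, ← hu', ← polyToLS_comp_vecMul,
      ← polyToLS_comp_vecMul]
    exact funext fun j => (map_add _ _ _).trans (congrArg₂ _ (map_mul _ _ _) (map_mul _ _ _))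
  · refine funext fun j => ?_
    have hv : mapRingHom ψ ((v ᵥ* G) j) = f * y j :=
      (RingHom.map_vecMul _ G v j).trans (congrFun h j).symm
    have hw : mapRingHom ψ ((w ᵥ* G') j) = X ^ m * y j :=
      (RingHom.map_vecMul _ G' w j).trans (congrFun hw j).symm
    simp only [Function.comp_apply, Pi.add_apply, Pi.smul_apply, smul_eq_mul, map_add, map_mul,
      hv, hw]
    linear_combination y j * hbezout

lemma NonCatastrophic.exists_degree_map_minorOn_updateRow_lt (hψ : Function.Surjective ψ)
    (hker : IsNilpotent (RingHom.ker ψ)) {G G' : Matrix (Fin k) (Fin n) R[X]}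
    (hG : FullRowRank G) (hG' : NonCatastrophic G') (hcode : code G' = code G) {f : K[X]}
    (hf : Irreducible f) (hfX : ¬f ∣ X)
    (hdvd : ∀ c, f ∣ minorOn (G.map (mapRingHom ψ)) c) :
    ∃ (i : Fin k) (x : Fin n → R[X]) (c : Fin k → Fin n), polyToLS R ∘ x ∈ code G ∧
      (minorOn (G.updateRow i x) c).map ψ ≠ 0 ∧
      ((minorOn (G.updateRow i x) c).map ψ).degree < ((minorOn G c).map ψ).degree := by
  obtain ⟨i, v, y, hvne, hvdeg, hy⟩ := exists_smul_eq_vecMul_of_irreducible hf hdvd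
  obtain ⟨x, hx, rfl⟩ := hG'.exists_mem_code_of_smul_eq_vecMul hψ hker hcode hf hfX hy
  obtain ⟨c, hc⟩ := hG
  rw [mem_nonZeroDivisors_iff_map_ne_zero hψ hker] at hc
  have hmul : f * (minorOn (G.updateRow i x) c).map ψ = v i * (minorOn G c).map ψ := by
    have := mul_minorOn_updateRow hy i c
    rwa [← map_updateRow, minorOn_map, minorOn_map] at this
  have hne : (minorOn (G.updateRow i x) c).map ψ ≠ 0 :=
    right_ne_zero_of_mul (hmul ▸ mul_ne_zero hvne hc)
  refine ⟨i, x, c, hx, hne, lt_of_add_lt_add_left (a := f.degree) ?_⟩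
  rw [← degree_mul, hmul, degree_mul]
  exact WithBot.add_lt_add_right (degree_ne_bot.2 hc) hvdeg

lemma exists_code_eq_and_intdeg_lt (hψ : Function.Surjective ψ) (hker : IsNilpotent (RingHom.ker ψ))
    {G : Matrix (Fin k) (Fin n) R[X]} {i : Fin k} {x : Fin n → R[X]} {c : Fin k → Fin n}
    (hx : polyToLS R ∘ x ∈ code G) (hne : (minorOn (G.updateRow i x) c).map ψ ≠ 0)
    (hlt : ((minorOn (G.updateRow i x) c).map ψ).degree < ((minorOn G c).map ψ).degree) :
    ∃ G' : Matrix (Fin k) (Fin n) R[X],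
      FullRowRank G' ∧ code G' = code G ∧ intdeg G' < intdeg G := by
  obtain ⟨w, hw⟩ := hx
  have hminor (c) := polyToLS_minorOn_updateRow (i := i) hw c
  have hcross (c c') : minorOn G c * minorOn (G.updateRow i x) c' =
      minorOn G c' * minorOn (G.updateRow i x) c := polyToLS_injective <| by
    rw [map_mul, map_mul, hminor, hminor]
    ring
  obtain ⟨u, hu⟩ := exists_unit_forall_degree_mul_lt hψ hker hcross hne hlt
  have hwi : IsUnit (w i) :=
    isUnit_of_mul_isUnit_left (hminor c ▸ isUnit_polyToLS hψ hker hne)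
  have hux : polyToLS R ∘ ((u : R[X]) • x) = (polyToLS R u • w) ᵥ* G.map (polyToLS R) := by
    rw [Matrix.smul_vecMul, ← hw]
    exact funext fun j => map_mul _ _ _
  refine ⟨G.updateRow i ((u : R[X]) • x), ⟨c, ?_⟩,
    code_updateRow hux ((u.isUnit.map (polyToLS R)).mul hwi), ?_⟩
  · rw [minorOn_updateRow_smul]
    exact mul_mem u.isUnit.mem_nonZeroDivisors
      ((mem_nonZeroDivisors_iff_map_ne_zero hψ hker).2 hne)
  · have hle (c) : (minorOn G c).degree ≤ intdeg G :=
      Finset.le_sup (f := fun c => (minorOn G c).degree) (Finset.mem_univ c)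
    have hpos : ⊥ < intdeg G := bot_le.trans_lt <|
      ((hu c (fun h => hne (by rw [h, Polynomial.map_zero]))).trans_le (hle c))
    refine (Finset.sup_lt_iff hpos).2 fun c' _ => ?_
    rw [minorOn_updateRow_smul]
    by_cases hzero : minorOn (G.updateRow i x) c' = 0
    · rwa [hzero, mul_zero, degree_zero]
    · exact (hu c' hzero).trans_le (hle c')

end Reduction

section GcdMinors

variable {R K : Type*} [CommRing R] [Field K] [DecidableEq K]

lemma exists_eq_X_pow_of_irreducible_dvd {g : K[X]} (hg : g ≠ 0) (hnorm : normalize g = g)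
    (h : ∀ f, Irreducible f → f ∣ g → f ∣ X) : ∃ s : ℕ, g = X ^ s := by
  have hX : ∀ {f}, f ∈ UniqueFactorizationMonoid.normalizedFactors g → f = X := fun {f} hf => by
    have hirr := UniqueFactorizationMonoid.irreducible_of_normalized_factor f hf
    have hdvd := h f hirr (UniqueFactorizationMonoid.dvd_of_mem_normalizedFactors hf)
    exact (hirr.associated_of_dvd irreducible_X hdvd).eq_of_normalized
      (UniqueFactorizationMonoid.normalize_normalized_factor f hf) monic_X.normalize_eq_self
  obtain ⟨s, hs⟩ :=
    UniqueFactorizationMonoid.exists_associated_prime_pow_of_unique_normalized_factor hX hg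
  exact ⟨s, hs.symm.eq_of_normalized hnorm (monic_X_pow s).normalize_eq_self⟩

theorem noncatastrophic_iff_gcdMinors_pow_X_general {ψ : R →+* K}
    (hψ : Function.Surjective ψ) (hker : IsNilpotent (RingHom.ker ψ)) {k n : ℕ}
    {G : Matrix (Fin k) (Fin n) R[X]} (hG : FullRowRank G)
    (hmin : ∀ G' : Matrix (Fin k) (Fin n) R[X],
      FullRowRank G' → code G' = code G → intdeg G ≤ intdeg G') :
    (∃ G' : Matrix (Fin k) (Fin n) R[X],
        FullRowRank G' ∧ code G' = code G ∧ NonCatastrophic G') ↔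
      ∃ s : ℕ, (Finset.univ.gcd fun c : Fin k → Fin n => minorOn (G.map (mapRingHom ψ)) c) =
        X ^ s := by
  constructor
  · rintro ⟨G', -, hcode, hG'⟩
    refine exists_eq_X_pow_of_irreducible_dvd (fun hzero => ?_) Finset.normalize_gcd
      fun f hf hdvd => ?_
    · obtain ⟨c, hc⟩ := hG
      refine (mem_nonZeroDivisors_iff_map_ne_zero hψ hker).1 hc ?_
      exact (minorOn_map _ G c).symm.trans (Finset.gcd_eq_zero_iff.1 hzero c (Finset.mem_univ c))
    · by_contra hfX
      obtain ⟨i, x, c, hx, hne, hlt⟩ := hG'.exists_degree_map_minorOn_updateRow_lt hψ hker hG hcode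
        hf hfX fun c => hdvd.trans (Finset.gcd_dvd (Finset.mem_univ c))
      obtain ⟨G₁, hG₁, hcode₁, hdeg⟩ := exists_code_eq_and_intdeg_lt hψ hker hx hne hlt
      exact (hmin G₁ hG₁ hcode₁).not_gt hdeg
  · rintro ⟨s, hs⟩
    have hmem : mapRingHom ψ (X ^ s) ∈ (Ideal.span (Set.range (minorOn G))).map (mapRingHom ψ) := by
      rw [← span_minorOn_map, map_pow, coe_mapRingHom, map_X, ← hs]
      obtain ⟨a, ha⟩ := Finset.gcd_eq_sum_mul Finset.univ (minorOn (G.map (mapRingHom ψ)))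
      rw [ha]
      exact Ideal.sum_mem _ fun c _ => Ideal.mul_mem_right _ _ (Ideal.subset_span ⟨c, rfl⟩)
    obtain ⟨N, hN⟩ := mem_radical_of_map_mem (map_surjective ψ hψ)
      (isNilpotent_ker_mapRingHom hker) hmem
    rw [← pow_mul] at hN
    exact ⟨G, hG, rfl, nonCatastrophic_of_X_pow_mem_span hN⟩

end GcdMinors

lemma isNilpotent_ker_castHom {p r : ℕ} (hr : r ≠ 0) :
    IsNilpotent (RingHom.ker (ZMod.castHom (dvd_pow_self p hr) (ZMod p))) := by
  have hle : RingHom.ker (ZMod.castHom (dvd_pow_self p hr) (ZMod p)) ≤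
      Ideal.span {(p : ZMod (p ^ r))} := fun x hx => by
    obtain ⟨m, rfl⟩ := ZMod.intCast_surjective x
    rw [RingHom.mem_ker, map_intCast, ZMod.intCast_zmod_eq_zero_iff_dvd] at hx
    exact Ideal.mem_span_singleton.2 (by simpa using map_dvd (Int.castRingHom (ZMod (p ^ r))) hx)
  refine ⟨r, le_bot_iff.1 ((Ideal.pow_right_mono hle r).trans_eq ?_)⟩
  rw [Ideal.span_singleton_pow, ← Nat.cast_pow, ZMod.natCast_self, Ideal.span_singleton_zero]

/-- A free convolutional code over `ℤ/p^r` with RIDM encoder `G` is non-catastrophic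
(admits some non-catastrophic polynomial generator matrix) iff the monic GCD of the
maximal minors of the reduction of `G` modulo `p` equals `D^s` for some `s ≥ 0`. -/
theorem noncatastrophic_iff_gcdMinors_pow_X
    (p : ℕ) [Fact p.Prime] (r : ℕ) (hr : r ≠ 0) (k n : ℕ)
    (G : Matrix (Fin k) (Fin n) (Polynomial (ZMod (p ^ r))))
    (hG : FullRowRank G)
    (hRIDM : ∀ G' : Matrix (Fin k) (Fin n) (Polynomial (ZMod (p ^ r))),
      FullRowRank G' → code G' = code G → intdeg G ≤ intdeg G') :
    (∃ G' : Matrix (Fin k) (Fin n) (Polynomial (ZMod (p ^ r))),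
        FullRowRank G' ∧ code G' = code G ∧ NonCatastrophic G')
      ↔ ∃ s : ℕ, gcdMinors (reduceMod p r hr G) = Polynomial.X ^ s := by
  exact noncatastrophic_iff_gcdMinors_pow_X_general
    (ψ := ZMod.castHom (dvd_pow_self p hr) (ZMod p)) (ZMod.castHom_surjective _)
    (isNilpotent_ker_castHom hr) hG hRIDM
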